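/- arXiv:2211.01528 — 3 statements merged into one kernel-verified Lean document; each statement's English description precedes it below -/
import Mathlib

section
/- Let μ be a joint probability distribution of (X, Y) on 𝒳 × 𝒴 with 𝒴 = {e_1, …, e_k} ⊂ ℝ^k the one-hot labels, let f*(x) = E_μ[Y | X = x] be the Bayes regressor and r* = f*♯μ^X. Fix a probability distribution q on 𝒴. Then for any coupling γ ∈ Γ(r*, q), there exists a randomized classifier h : 𝒳 → 𝒴 (namely the one obtained by composing f* with the conditional distribution of the second coordinate of γ given the first) satisfying h♯μ^X = q and Err(h) := P(h(X) ≠ Y) = (1/2) ∫_{Δ_k × 𝒴} ‖s − y‖₁ dγ(s, y). -/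
/-!
The classifier is `K x = γ(· | s = f x)`, the disintegration of `γ` along its first marginal
composed with `f`. Since `γ.fst` is the law of `f`, every `γ`-integral of `φ (s, y)` equals
`∫ ∑ y, φ (f x, y) * K x {y} dμ^X`; taking `φ` an indicator of the label gives the output law `q`.

For `s` in the simplex, `‖s - e_y‖₁ = 2 (1 - s y) = 2 ∑_{i ≠ y} s i` (`l1Cost_eq`), while
conditioning on `X` gives error `∫ ∑ i, f x i * K x {i}ᶜ dμ^X` (`lintegral_bayes`). Both integrands
are the sum of `f x i * K x {y}` over the pairs `i ≠ y`, up to the factor `2`.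
-/

open MeasureTheory ProbabilityTheory
open scoped ENNReal NNReal BigOperators

noncomputable section

/-- The one-hot vector `e_i ∈ ℝ^k`. -/
def oneHot (k : ℕ) (i : Fin k) : Fin k → ℝ := fun j => if j = i then 1 else 0

/-- ℓ₁ transportation cost between a point of ℝ^k and a vertex `e_y`. -/
def l1Cost (k : ℕ) (s : Fin k → ℝ) (y : Fin k) : ℝ≥0∞ :=
  ENNReal.ofReal (∑ j, |s j - oneHot k y j|)

/-- `γ` is a coupling of `p` and `q`. -/
def IsCoupling {α β : Type*} [MeasurableSpace α] [MeasurableSpace β]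
    (γ : Measure (α × β)) (p : Measure α) (q : Measure β) : Prop :=
  γ.fst = p ∧ γ.snd = q

/-- Wasserstein-1 cost (under the ℓ₁ norm) between a distribution on the simplex
and a distribution on the vertices (encoded by `Fin k`). -/
def W1 (k : ℕ) (p : Measure (Fin k → ℝ)) (q : Measure (Fin k)) : ℝ≥0∞ :=
  ⨅ (γ : Measure ((Fin k → ℝ) × Fin k)) (_ : IsCoupling γ p q),
    ∫⁻ z, l1Cost k z.1 z.2 ∂γ

/-- `f` is the Bayes regressor of the one-hot labels for `μ`, a joint distribution on
`𝒳 × 𝒴` with labels encoded by `Fin k`: it takes values in the simplex `Δ_k` and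
`f x i` is the conditional probability of class `i` given `X = x`. -/
def IsBayesRegressor {𝒳 : Type*} [MeasurableSpace 𝒳] (k : ℕ)
    (μ : Measure (𝒳 × Fin k)) (f : 𝒳 → Fin k → ℝ) : Prop :=
  Measurable f ∧ (∀ x, (∀ i, 0 ≤ f x i) ∧ ∑ i, f x i = 1) ∧
    ∀ (S : Set 𝒳), MeasurableSet S → ∀ i : Fin k,
      μ (S ×ˢ ({i} : Set (Fin k))) = ∫⁻ x in S, ENNReal.ofReal (f x i) ∂μ.fst

lemma l1Cost_eq {k : ℕ} {s : Fin k → ℝ} (h0 : ∀ i, 0 ≤ s i) (h1 : ∑ i, s i = 1) (y : Fin k) :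
    l1Cost k s y = 2 * ∑ i, if i = y then 0 else ENNReal.ofReal (s i) := by
  have hsum : ∑ j, |s j - oneHot k y j| = 2 * ∑ i, if i = y then 0 else s i := by
    have hy : s y ≤ 1 := h1 ▸ Finset.single_le_sum (fun i _ => h0 i) (Finset.mem_univ y)
    have e1 : ∀ j, |s j - oneHot k y j|
        = (if j = y then 0 else s j) + (if j = y then 1 - s y else 0) := by
      intro j
      unfold oneHot
      split_ifs with h
      · subst h
        rw [abs_sub_comm, abs_of_nonneg (by linarith)]; ring
      · rw [sub_zero, abs_of_nonneg (h0 j), add_zero]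
    have e2 : ∑ i, s i = ∑ i, (if i = y then 0 else s i) + s y := by
      rw [show s y = ∑ i, if i = y then s y else 0 by simp, ← Finset.sum_add_distrib]
      refine Finset.sum_congr rfl fun i _ => ?_
      split_ifs with h <;> simp [h]
    simp_rw [e1, Finset.sum_add_distrib]
    rw [Finset.sum_ite_eq' Finset.univ y]
    simp only [Finset.mem_univ, if_true]
    linarith
  unfold l1Cost
  rw [hsum, ENNReal.ofReal_mul (by norm_num), ENNReal.ofReal_sum_of_nonneg]
  · congr 1
    · simp
    · refine Finset.sum_congr rfl fun i _ => ?_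
      split_ifs <;> simp
  · intro i _
    split_ifs
    exacts [le_rfl, h0 i]

/-- Integration against `μ` by conditioning on the first coordinate: the label `i` has conditional
probability `f x i`. -/
lemma lintegral_bayes {𝒳 : Type*} [MeasurableSpace 𝒳] {k : ℕ} {μ : Measure (𝒳 × Fin k)}
    {f : 𝒳 → Fin k → ℝ} (hf : IsBayesRegressor k μ f) {g : 𝒳 × Fin k → ℝ≥0∞}
    (hg : Measurable g) :
    ∫⁻ p, g p ∂μ = ∫⁻ x, ∑ i, ENNReal.ofReal (f x i) * g (x, i) ∂μ.fst := by
  obtain ⟨hm, -, hμ⟩ := hf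
  have hfi : ∀ i, Measurable fun x => ENNReal.ofReal (f x i) := fun i => by fun_prop
  have key : μ = ∑ i, ((μ.fst.withDensity fun x => ENNReal.ofReal (f x i)).map
      fun x => (x, i)) := by
    ext A hA
    have hAi : ∀ i : Fin k, MeasurableSet ((fun x : 𝒳 => (x, i)) ⁻¹' A) :=
      fun i => measurable_prodMk_right hA
    have hU : A = ⋃ i : Fin k, ((fun x : 𝒳 => (x, i)) ⁻¹' A) ×ˢ ({i} : Set (Fin k)) := by
      ext ⟨x, i⟩
      simp
    rw [Measure.finsetSum_apply]
    conv_lhs => rw [hU]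
    rw [measure_iUnion, tsum_fintype]
    · refine Finset.sum_congr rfl fun i _ => ?_
      rw [hμ _ (hAi i), Measure.map_apply measurable_prodMk_right hA,
        withDensity_apply _ (hAi i)]
    · intro i j hij
      exact Set.disjoint_prod.2 (Or.inr (by simpa using hij))
    · exact fun i => (hAi i).prod (measurableSet_singleton i)
  conv_lhs => rw [key]
  rw [lintegral_finsetSum_measure, lintegral_finsetSum Finset.univ
    (f := fun i x => ENNReal.ofReal (f x i) * g (x, i))
    fun i _ => (hfi i).mul (hg.comp measurable_prodMk_right)]
  refine Finset.sum_congr rfl fun i _ => ?_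
  rw [lintegral_map hg measurable_prodMk_right]
  exact lintegral_withDensity_eq_lintegral_mul _ (hfi i) (hg.comp measurable_prodMk_right)

/-- **Lemma 3.2, converse direction.** For any coupling `γ` of `r* = f*♯μ^X` and `q`,
there is a randomized classifier (a Markov kernel, namely the composition of `f*` with
the conditional distribution of the second coordinate of `γ` given the first) whose
output distribution on `μ^X` is `q` and whose error rate equals half the ℓ₁
transportation cost of `γ`. -/
theorem coupling_to_classifier
    {𝒳 : Type*} [MeasurableSpace 𝒳] (k : ℕ)
    (μ : Measure (𝒳 × Fin k)) [IsProbabilityMeasure μ]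
    (f : 𝒳 → Fin k → ℝ) (hf : IsBayesRegressor k μ f)
    (q : Measure (Fin k)) [IsProbabilityMeasure q]
    (γ : Measure ((Fin k → ℝ) × Fin k))
    (hγ : IsCoupling γ (μ.fst.map f) q) :
    ∃ K : Kernel 𝒳 (Fin k), IsMarkovKernel K ∧
      μ.fst.bind (fun x => K x) = q ∧
        (∫⁻ p, K p.1 ({p.2}ᶜ) ∂μ) = (1 / 2) * ∫⁻ z, l1Cost k z.1 z.2 ∂γ := by
  have hm := hf.1
  have : IsProbabilityMeasure (μ.fst.map f) := Measure.isProbabilityMeasure_map hm.aemeasurable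
  have : IsProbabilityMeasure γ := ⟨by
    rw [← Measure.fst_univ, hγ.1]; exact measure_univ⟩
  -- A probability measure lives on `Fin k`, so `k ≠ 0`; disintegration of `γ` needs this.
  have : Nonempty (Fin k) := q.nonempty_of_neZero
  -- Disintegration of `γ` over the law of `f`, pulled back to `𝒳`.
  have hint : ∀ φ : (Fin k → ℝ) × Fin k → ℝ≥0∞, Measurable φ →
      ∫⁻ z, φ z ∂γ = ∫⁻ x, ∑ y, φ (f x, y) * γ.condKernel (f x) {y} ∂μ.fst := by
    intro φ hφ
    conv_lhs => rw [← γ.disintegrate γ.condKernel]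
    rw [Measure.lintegral_compProd hφ, hγ.1, lintegral_map hφ.lintegral_kernel_prod_right' hm]
    simp_rw [lintegral_fintype]
  refine ⟨γ.condKernel.comap f hm, inferInstance, ?_, ?_⟩
  · ext A hA
    rw [Measure.bind_apply hA (Kernel.aemeasurable _), ← hγ.2, Measure.snd_apply hA,
      ← lintegral_indicator_one (measurable_snd hA),
      hint _ (measurable_one.indicator (measurable_snd hA))]
    refine lintegral_congr fun x => ?_
    rw [Kernel.comap_apply, ← lintegral_indicator_one hA, lintegral_fintype]
    rfl
  · have hcost : Measurable fun z : (Fin k → ℝ) × Fin k => l1Cost k z.1 z.2 := by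
      refine measurable_from_prod_countable_left fun y => ?_
      unfold l1Cost
      fun_prop
    have hcompl : Measurable fun p : 𝒳 × Fin k => γ.condKernel.comap f hm p.1 ({p.2}ᶜ) :=
      measurable_from_prod_countable_left fun y =>
        Kernel.measurable_coe _ (measurableSet_singleton y).compl
    rw [lintegral_bayes hf hcompl, hint _ hcost, ← lintegral_const_mul' _ _ (by simp)]
    refine lintegral_congr fun x => ?_
    have hK : ∀ i : Fin k, γ.condKernel (f x) ({i}ᶜ)
        = ∑ y, if i = y then 0 else γ.condKernel (f x) {y} := by
      intro i
      rw [← lintegral_indicator_one (measurableSet_singleton i).compl, lintegral_fintype]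
      refine Finset.sum_congr rfl fun y _ => ?_
      by_cases h : i = y
      · simp [h]
      · simp [h, Ne.symm h]
    simp_rw [Kernel.comap_apply, hK, l1Cost_eq (hf.2.1 x).1 (hf.2.1 x).2, mul_assoc]
    rw [← Finset.mul_sum, ← mul_assoc, one_div, ENNReal.inv_mul_cancel (by simp) (by simp),
      one_mul]
    simp_rw [Finset.mul_sum, Finset.sum_mul]
    rw [Finset.sum_comm]
    refine Finset.sum_congr rfl fun y _ => Finset.sum_congr rfl fun i _ => ?_
    split_ifs <;> simp

end
end

section
/- Let μ be a realizable joint probability distribution of (X, Y, A) on 𝒳 × 𝒴 × [m] (i.e., there is a deterministic measurable labeling function with Y = f(X,A) μ-almost surely, equivalently the Bayes error is zero on every group), let f* be the Bayes regressor and r*_a = f*♯(μ^X_a × {a}). Then (1/2) · min_{q∈𝒬_k} Σ_{a∈[m]} W₁(r*_a, q) = min_{q∈𝒬_k} Σ_{a∈[m]} d_TV(p*_a, q), where p*_a is the distribution on {e_1,…,e_k} with p*_a(e_i) = P_μ(Y = e_i | A = a) and d_TV is the total variation distance. -/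
/-! The identity `(1/2) W₁(r*_a, q) = d_TV(p*_a, q)` holds for every group `a` and every `q`;
minimizing over `q` gives the theorem.

The bound `≥` (`sum_le_W1`) uses only that `p*_a` is the barycenter of `r*_a`: for a coupling of
`r*_a` and `q`, the cost in coordinate `i` is at least `|p*_a(e_i) - q(e_i)|`. For `≤`,
realizability makes the Bayes regressor a.s. one-hot, so that `r*_a` is `p*_a` placed on the
vertices (`map_bayes_eq_map_oneHot`). Distinct vertices are at `ℓ₁`-distance `2`, and the maximal
coupling moves exactly the mass `d_TV(p*_a, q)` (`W1_map_oneHot_le`). -/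

open MeasureTheory ProbabilityTheory
open scoped ENNReal NNReal BigOperators

noncomputable section

/-- Total variation distance between two finite distributions on the vertices
(encoded by `Fin k`), `d_TV(p,q) = (1/2) Σ_i |p(e_i) − q(e_i)|`, written in `ℝ≥0∞`
using truncated subtraction (`(p i - q i) + (q i - p i) = |p(e_i) − q(e_i)|`). -/
def dTVfin (k : ℕ) (p q : Measure (Fin k)) : ℝ≥0∞ :=
  (1 / 2) * ∑ i : Fin k, ((p {i} - q {i}) + (q {i} - p {i}))

/-- The law `f♯μ^X` has barycenter the class distribution. -/
lemma lintegral_coord_map_bayes {𝒳 : Type*} [MeasurableSpace 𝒳] {k : ℕ}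
    {μ : Measure (𝒳 × Fin k)} {f : 𝒳 → Fin k → ℝ} (hf : IsBayesRegressor k μ f) (j : Fin k) :
    ∫⁻ s, ENNReal.ofReal (s j) ∂(μ.fst.map f) = μ.snd {j} := by
  rw [lintegral_map (by fun_prop) hf.1, Measure.snd_apply (measurableSet_singleton j)]
  have h := hf.2.2 Set.univ MeasurableSet.univ j
  rw [Measure.restrict_univ] at h
  rw [← h, Set.univ_prod]

/-- The lower bound `Σ_i |p_i - q_i| ≤ W₁(r, q)` for any `r` with barycenter `p`: in each
coordinate, the triangle inequality is integrated against a coupling. -/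
lemma sum_le_W1 {k : ℕ} {r : Measure (Fin k → ℝ)} {p q : Measure (Fin k)}
    [IsFiniteMeasure p] [IsFiniteMeasure q]
    (hr : ∀ j, ∫⁻ s, ENNReal.ofReal (s j) ∂r = p {j}) :
    ∑ i : Fin k, ((p {i} - q {i}) + (q {i} - p {i})) ≤ W1 k r q := by
  refine le_iInf₂ fun γ hγ => ?_
  have hcost : ∫⁻ z, l1Cost k z.1 z.2 ∂γ
      = ∑ j, ∫⁻ z, ENNReal.ofReal |z.1 j - oneHot k z.2 j| ∂γ := by
    rw [← lintegral_finsetSum]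
    · refine lintegral_congr fun z => ?_
      rw [l1Cost, ENNReal.ofReal_sum_of_nonneg fun _ _ => abs_nonneg _]
    · intro j _
      have : Measurable fun y : Fin k => oneHot k y j := measurable_of_finite _
      fun_prop
  rw [hcost]
  refine Finset.sum_le_sum fun j _ => ?_
  have hm : Measurable fun y : Fin k => oneHot k y j := measurable_of_finite _
  have hp : ∫⁻ z, ENNReal.ofReal (z.1 j) ∂γ = p {j} := by
    rw [← hr j, ← hγ.1, Measure.fst, lintegral_map (by fun_prop) measurable_fst]
  have hq : ∫⁻ z, ENNReal.ofReal (oneHot k z.2 j) ∂γ = q {j} := by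
    have h1 : ∫⁻ y, ENNReal.ofReal (oneHot k y j) ∂q = q {j} := by
      rw [← lintegral_indicator_one (measurableSet_singleton j)]
      refine lintegral_congr fun y => ?_
      by_cases h : y = j
      · simp [oneHot, h]
      · simp [oneHot, h, Ne.symm h]
    rw [← h1, ← hγ.2, Measure.snd, lintegral_map (by fun_prop) measurable_snd]
  have h1 : p {j} ≤ ∫⁻ z, ENNReal.ofReal |z.1 j - oneHot k z.2 j| ∂γ + q {j} := by
    rw [← hp, ← hq, ← lintegral_add_right _ (by fun_prop)]
    refine lintegral_mono fun z => ?_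
    refine le_trans (ENNReal.ofReal_le_ofReal ?_) ENNReal.ofReal_add_le
    linarith [le_abs_self (z.1 j - oneHot k z.2 j)]
  have h2 : q {j} ≤ ∫⁻ z, ENNReal.ofReal |z.1 j - oneHot k z.2 j| ∂γ + p {j} := by
    rw [← hp, ← hq, ← lintegral_add_right _ (by fun_prop)]
    refine lintegral_mono fun z => ?_
    refine le_trans (ENNReal.ofReal_le_ofReal ?_) ENNReal.ofReal_add_le
    linarith [neg_le_abs (z.1 j - oneHot k z.2 j)]
  -- one of the two truncated differences vanishes
  rcases le_total (p {j}) (q {j}) with h | h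
  · rw [tsub_eq_zero_of_le h, zero_add]
    exact tsub_le_iff_right.2 h2
  · rw [tsub_eq_zero_of_le h, add_zero]
    exact tsub_le_iff_right.2 h1

lemma l1Cost_oneHot_self (k : ℕ) (i : Fin k) : l1Cost k (oneHot k i) i = 0 := by
  simp [l1Cost]

lemma l1Cost_oneHot_le (k : ℕ) (i y : Fin k) : l1Cost k (oneHot k i) y ≤ 2 := by
  rw [l1Cost, ← ENNReal.ofReal_ofNat]
  refine ENNReal.ofReal_le_ofReal ?_
  calc ∑ j, |oneHot k i j - oneHot k y j| ≤ ∑ j, (oneHot k i j + oneHot k y j) := by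
        refine Finset.sum_le_sum fun j _ => ?_
        unfold oneHot
        split_ifs <;> norm_num
    _ = 2 := by
        rw [Finset.sum_add_distrib]
        simp [oneHot]
        norm_num

lemma measurable_l1Cost (k : ℕ) :
    Measurable fun z : (Fin k → ℝ) × Fin k => l1Cost k z.1 z.2 := by
  have : ∀ j, Measurable fun y : Fin k => oneHot k y j := fun j => measurable_of_finite _
  unfold l1Cost
  fun_prop

/-- The upper bound `W₁(oneHot♯p, q) ≤ Σ_i |p_i - q_i|`, from the maximal coupling: the common
mass `min p q` stays in place, and the excess `(p - q)⁺` is coupled with the deficit `(q - p)⁺`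
by a normalized product. -/
lemma W1_map_oneHot_le {k : ℕ} (p q : Measure (Fin k))
    [IsProbabilityMeasure p] [IsProbabilityMeasure q] :
    W1 k (p.map (oneHot k)) q ≤ ∑ i : Fin k, ((p {i} - q {i}) + (q {i} - p {i})) := by
  have hmo : Measurable (oneHot k) := measurable_of_finite _
  have hsum : ∀ ρ : Measure (Fin k), ρ = ∑ i, ρ {i} • Measure.dirac i := fun ρ => by
    rw [← Measure.sum_fintype, Measure.sum_smul_dirac]
  have hone : ∀ ρ : Measure (Fin k), [IsProbabilityMeasure ρ] → ∑ i, ρ {i} = 1 := fun ρ _ => by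
    rw [sum_measure_singleton, Finset.coe_univ, measure_univ]
  -- the excess and the deficit have the same total mass `δ`
  set δ : ℝ≥0∞ := ∑ i, (p {i} - q {i}) with hδ
  have hδ' : ∑ i, (q {i} - p {i}) = δ := by
    have e1 : ∑ i, (p {i} - q {i}) + ∑ i, min (p {i}) (q {i}) = 1 := by
      rw [← Finset.sum_add_distrib, ← hone p]
      refine Finset.sum_congr rfl fun i _ => tsub_add_min
    have e2 : ∑ i, (q {i} - p {i}) + ∑ i, min (p {i}) (q {i}) = 1 := by
      rw [← Finset.sum_add_distrib, ← hone q]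
      refine Finset.sum_congr rfl fun i _ => ?_
      rw [min_comm, tsub_add_min]
    have hfin : ∑ i, min (p {i}) (q {i}) ≠ ⊤ := by
      intro h
      rw [h, add_top] at e1
      exact ENNReal.top_ne_one e1
    exact (ENNReal.add_left_inj hfin).1 (e2.trans e1.symm)
  have hδtop : δ ≠ ⊤ := by
    rw [hδ]
    exact ENNReal.sum_ne_top.2 fun i _ => ENNReal.sub_ne_top (measure_ne_top _ _)
  -- if `δ = 0` then `δ⁻¹ = ⊤`, but every term it multiplies vanishes
  have hcancel : ∀ c : ℝ≥0∞, c ≤ δ → δ⁻¹ * (c * δ) = c := fun c hc => by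
    by_cases h0 : δ = 0
    · have : c = 0 := le_antisymm (h0 ▸ hc) zero_le
      simp [this]
    · rw [mul_comm c, ← mul_assoc, ENNReal.inv_mul_cancel h0 hδtop, one_mul]
  have hle1 : ∀ i, p {i} - q {i} ≤ δ := fun i =>
    Finset.single_le_sum (f := fun i => p {i} - q {i}) (fun _ _ => zero_le) (Finset.mem_univ i)
  have hle2 : ∀ i, q {i} - p {i} ≤ δ := fun i => hδ' ▸
    Finset.single_le_sum (f := fun i => q {i} - p {i}) (fun _ _ => zero_le) (Finset.mem_univ i)
  let γ : Measure ((Fin k → ℝ) × Fin k) :=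
    ∑ i, min (p {i}) (q {i}) • Measure.dirac (oneHot k i, i) +
      ∑ i, ∑ j, (δ⁻¹ * ((p {i} - q {i}) * (q {j} - p {j}))) • Measure.dirac (oneHot k i, j)
  have hrow : ∀ i, ∑ j, δ⁻¹ * ((p {i} - q {i}) * (q {j} - p {j})) = p {i} - q {i} := fun i => by
    rw [← Finset.mul_sum, ← Finset.mul_sum, hδ', hcancel _ (hle1 i)]
  have hcol : ∀ j, ∑ i, δ⁻¹ * ((p {i} - q {i}) * (q {j} - p {j})) = q {j} - p {j} := fun j => by
    rw [← Finset.mul_sum, ← Finset.sum_mul, ← hδ, mul_comm δ, hcancel _ (hle2 j)]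
  have hmap : ∀ {α β : Type} [MeasurableSpace α] [MeasurableSpace β] (g : α → β),
      Measurable g → ∀ (w : Fin k → ℝ≥0∞) (x : Fin k → α),
      (∑ i, w i • Measure.dirac (x i)).map g = ∑ i, w i • Measure.dirac (g (x i)) := by
    intro α β _ _ g hg w x
    simp only [← Measure.mapₗ_apply_of_measurable hg, map_sum, map_smul]
    simp only [Measure.mapₗ_apply_of_measurable hg, Measure.map_dirac' hg]
  have hγ : IsCoupling γ (p.map (oneHot k)) q := by
    constructor
    · conv_rhs => rw [hsum p, hmap _ hmo]
      simp only [γ, Measure.fst, Measure.map_add _ _ measurable_fst, hmap _ measurable_fst]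
      simp only [← Measure.mapₗ_apply_of_measurable measurable_fst, map_sum, map_smul]
      simp only [Measure.mapₗ_apply_of_measurable measurable_fst, Measure.map_dirac' measurable_fst]
      simp only [← Finset.sum_smul, hrow]
      rw [← Finset.sum_add_distrib]
      refine Finset.sum_congr rfl fun i _ => ?_
      rw [← add_smul, add_comm, tsub_add_min]
    · conv_rhs => rw [hsum q]
      simp only [γ, Measure.snd, Measure.map_add _ _ measurable_snd, hmap _ measurable_snd]
      rw [Finset.sum_comm]
      simp only [← Measure.mapₗ_apply_of_measurable measurable_snd, map_sum, map_smul]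
      simp only [Measure.mapₗ_apply_of_measurable measurable_snd, Measure.map_dirac' measurable_snd]
      simp only [← Finset.sum_smul, hcol]
      rw [← Finset.sum_add_distrib]
      refine Finset.sum_congr rfl fun i _ => ?_
      rw [← add_smul, add_comm, min_comm, tsub_add_min]
  refine (iInf₂_le γ hγ).trans ?_
  have hd : ∀ i j, ∫⁻ z, l1Cost k z.1 z.2 ∂(Measure.dirac (oneHot k i, j))
      = l1Cost k (oneHot k i) j := fun i j => lintegral_dirac' _ (measurable_l1Cost k)
  simp only [γ, lintegral_add_measure, lintegral_finsetSum_measure, lintegral_smul_measure, hd,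
    l1Cost_oneHot_self, smul_zero, Finset.sum_const_zero, zero_add]
  calc ∑ i, ∑ j, (δ⁻¹ * ((p {i} - q {i}) * (q {j} - p {j}))) • l1Cost k (oneHot k i) j
      ≤ ∑ i, ∑ j, (δ⁻¹ * ((p {i} - q {i}) * (q {j} - p {j}))) * 2 := by
        refine Finset.sum_le_sum fun i _ => Finset.sum_le_sum fun j _ => ?_
        rw [smul_eq_mul]
        gcongr
        exact l1Cost_oneHot_le k i j
    _ = δ * 2 := by simp only [← Finset.sum_mul, hrow, ← hδ]
    _ = ∑ i : Fin k, ((p {i} - q {i}) + (q {i} - p {i})) := by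
        rw [Finset.sum_add_distrib, hδ', ← hδ, mul_two]

/-- Under realizability the Bayes regressor is a.s. the one-hot encoding of the labeling
function, so its law is the class distribution placed on the vertices. -/
lemma map_bayes_eq_map_oneHot {𝒳 : Type*} [MeasurableSpace 𝒳] {k : ℕ}
    {μ : Measure (𝒳 × Fin k)} [IsProbabilityMeasure μ] {f : 𝒳 → Fin k → ℝ}
    (hf : IsBayesRegressor k μ f) {g : 𝒳 → Fin k} (hg : Measurable g)
    (hgμ : μ {p | p.2 = g p.1} = 1) :
    μ.fst.map f = μ.snd.map (oneHot k) := by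
  have hmo : Measurable (oneHot k) := measurable_of_finite _
  have hms : MeasurableSet {p : 𝒳 × Fin k | p.2 = g p.1} :=
    measurableSet_eq_fun measurable_snd (hg.comp measurable_fst)
  have hae : ∀ᵐ p ∂μ, p.2 = g p.1 := (prob_compl_eq_zero_iff hms).2 hgμ
  -- off the region labeled `j`, class `j` has conditional probability zero
  have hzero : ∀ j, ∀ᵐ x ∂μ.fst, g x ≠ j → f x j = 0 := fun j => by
    have hS : MeasurableSet {x | g x ≠ j} := hg (measurableSet_singleton j).compl
    have h := hf.2.2 _ hS j
    have h0 : μ ({x | g x ≠ j} ×ˢ ({j} : Set (Fin k))) = 0 := by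
      refine measure_mono_null ?_ hae
      rintro ⟨x, y⟩ ⟨hx, hy⟩ heq
      simp only [Set.mem_singleton_iff, Set.mem_ofPred_eq] at hx hy heq
      exact hx (heq ▸ hy)
    have hfj : Measurable fun x => ENNReal.ofReal (f x j) := by
      have := hf.1
      fun_prop
    rw [h0, eq_comm, lintegral_eq_zero_iff hfj, Filter.EventuallyEq, ae_restrict_iff' hS] at h
    filter_upwards [h] with x hx hgx
    exact le_antisymm (ENNReal.ofReal_eq_zero.1 (hx hgx)) ((hf.2.1 x).1 j)
  have hfg : f =ᵐ[μ.fst] oneHot k ∘ g := by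
    filter_upwards [ae_all_iff.2 hzero] with x hx
    funext j
    by_cases hj : j = g x
    · have h1 := (hf.2.1 x).2
      rw [Finset.sum_eq_single (g x) (fun b _ hb => hx b hb.symm) (by simp)] at h1
      simp [oneHot, hj, h1]
    · simp [oneHot, hj, hx j (Ne.symm hj)]
  rw [Measure.map_congr hfg, ← Measure.map_map hmo hg, Measure.fst,
    Measure.map_map hg measurable_fst, Measure.snd]
  congr 1
  exact Measure.map_congr (hae.mono fun p hp => hp.symm)

/-- The equality `W₁ / 2 = d_TV` holds for each group and each `q`, before minimizing. -/
lemma half_W1_eq_dTVfin {𝒳 : Type*} [MeasurableSpace 𝒳] {k : ℕ}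
    {μ : Measure (𝒳 × Fin k)} [IsProbabilityMeasure μ] {f : 𝒳 → Fin k → ℝ}
    (hf : IsBayesRegressor k μ f) {g : 𝒳 → Fin k} (hg : Measurable g)
    (hgμ : μ {p | p.2 = g p.1} = 1) (q : Measure (Fin k)) [IsProbabilityMeasure q] :
    (1 / 2) * W1 k (μ.fst.map f) q = dTVfin k μ.snd q := by
  rw [dTVfin]
  congr 1
  refine le_antisymm ?_ (sum_le_W1 (lintegral_coord_map_bayes hf))
  rw [map_bayes_eq_map_oneHot hf hg hgμ]
  exact W1_map_oneHot_le _ _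

/-- **Reduction to TV-barycenter** (Proposition A.2).  If the classification problem is
realizable, i.e. there is a deterministic measurable labeling function `flab` with
`Y = flab(X, A)` almost surely on every group, then the Wasserstein-barycenter value
`(1/2) min_q Σ_a W₁(r*_a, q)` equals the TV-barycenter value `min_q Σ_a d_TV(p*_a, q)`,
where `p*_a` is the class distribution of group `a`. -/
theorem realizable_reduction_to_tv_barycenter
    {𝒳 : Type*} [MeasurableSpace 𝒳] (k m : ℕ)
    (μ : Fin m → Measure (𝒳 × Fin k))
    (hμ : ∀ a, IsProbabilityMeasure (μ a))
    (f : 𝒳 × Fin m → Fin k → ℝ)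
    (hf : ∀ a : Fin m, IsBayesRegressor k (μ a) (fun x => f (x, a)))
    (flab : 𝒳 × Fin m → Fin k) (hflab : Measurable flab)
    (hrealizable : ∀ a : Fin m, (μ a) {p | p.2 = flab (p.1, a)} = 1) :
    ((1 / 2) * ⨅ (q : Measure (Fin k)) (_ : IsProbabilityMeasure q),
        ∑ a : Fin m, W1 k (((μ a).fst).map (fun x => f (x, a))) q) =
      ⨅ (q : Measure (Fin k)) (_ : IsProbabilityMeasure q),
        ∑ a : Fin m, dTVfin k ((μ a).snd) q := by
  have h0 : (1 / 2 : ℝ≥0∞) ≠ 0 := by simp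
  have ht : (1 / 2 : ℝ≥0∞) ≠ ⊤ := by simp
  rw [ENNReal.mul_iInf_of_ne h0 ht]
  refine iInf_congr fun q => ?_
  rw [ENNReal.mul_iInf_of_ne h0 ht]
  refine iInf_congr fun hq => ?_
  rw [Finset.mul_sum]
  refine Finset.sum_congr rfl fun a _ => ?_
  have := hμ a
  exact half_W1_eq_dTVfin (hf a) (g := fun x => flab (x, a))
    (hflab.comp measurable_prodMk_right) (hrealizable a) q

end
end

section
/- Let k ≥ 2 and let 𝒢_k be the class of maps g_ψ : Δ_k → {e_1, …, e_k}, ψ ∈ ℝ^k, defined by g_ψ(x) = e_{argmin_{i∈[k]} (‖x − e_i‖₁ − ψ_i)} with ties broken to the smallest index. Then no set C ⊆ Δ_k of cardinality k is Natarajan-shattered by 𝒢_k; that is, for every C ⊆ Δ_k with |C| = k and every pair of functions f_0, f_1 : C → [k] with f_0(x) ≠ f_1(x) for all x ∈ C, there exists a subset B ⊆ C such that no ψ ∈ ℝ^k satisfies g_ψ(x) = e_{f_0(x)} for all x ∈ B and g_ψ(x) = e_{f_1(x)} for all x ∈ C \ B. Consequently the Natarajan dimension of 𝒢_k is less than k.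 -/
open scoped BigOperators

/-!
On the simplex `‖x - e_i‖₁ = 2 (1 - x i)`, so `g_ψ x` maximizes `2 x i + ψ i` over `i`.
The vectors `e_{f0 x} - e_{f1 x}`, `x ∈ C`, are `k` vectors in the `(k-1)`-dimensional space of
sum-zero vectors, so they satisfy a nontrivial relation with coefficients `c x`
(`exists_relation`). Suppose `ψ` realizes `f0` exactly where `c > 0`, and `ψ'` realizes `f0`
exactly where `c < 0`. With the margins `m_ψ x = (2 x + ψ) (f0 x) - (2 x + ψ) (f1 x)`, every
`c x * m_ψ x` is `≥ 0` and every `c x * m_ψ' x` is `≤ 0`. Both families have the same sum over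
`C`, since the relation annihilates the contributions of `ψ` and `ψ'`. Hence all these
products vanish, so where `c x ≠ 0` both `ψ` and `ψ'` tie between `f0 x` and `f1 x`. The
tie-breaking rule then gives them the same output at `x`, although one outputs `f0 x` and the
other `f1 x`.
-/

noncomputable section

/-- The probability simplex `Δ_k ⊂ ℝ^k`. -/
def simplexSet (k : ℕ) : Set (Fin k → ℝ) :=
  {x | (∀ i, 0 ≤ x i) ∧ ∑ i, x i = 1}

/-- The index minimizing `v`, ties broken to the smallest index. -/
def argminIdx {k : ℕ} [NeZero k] (v : Fin k → ℝ) : Fin k :=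
  (Finset.univ.filter fun i => ∀ j, v i ≤ v j).min' (by
    obtain ⟨i, -, hi⟩ := Finset.exists_min_image Finset.univ v ⟨0, Finset.mem_univ 0⟩
    exact ⟨i, Finset.mem_filter.mpr ⟨Finset.mem_univ i, fun j => hi j (Finset.mem_univ j)⟩⟩)

/-- The weighted-nearest-vertex map `g_ψ(x) = e_{argmin_i (‖x − e_i‖₁ − ψ_i)}`
(ties broken to the smallest index), with the vertex `e_i` encoded by `i : Fin k`. -/
def gMap {k : ℕ} [NeZero k] (ψ : Fin k → ℝ) (x : Fin k → ℝ) : Fin k :=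
  argminIdx (fun i => (∑ l, |x l - oneHot k i l|) - ψ i)

theorem argminIdx_le {k : ℕ} [NeZero k] (v : Fin k → ℝ) (j : Fin k) :
    v (argminIdx v) ≤ v j :=
  (Finset.mem_filter.mp (Finset.min'_mem (Finset.univ.filter fun i => ∀ j, v i ≤ v j) _)).2 j

/-- The tie-breaking rule: an index attaining the minimum is not below `argminIdx`. -/
theorem argminIdx_le_of_eq {k : ℕ} [NeZero k] (v : Fin k → ℝ) (j : Fin k)
    (h : v j = v (argminIdx v)) : argminIdx v ≤ j :=
  Finset.min'_le _ _ (Finset.mem_filter.mpr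
    ⟨Finset.mem_univ j, fun l => h.le.trans (argminIdx_le v l)⟩)

theorem sum_abs_sub_oneHot {k : ℕ} {x : Fin k → ℝ} (hx : x ∈ simplexSet k) (i : Fin k) :
    ∑ l, |x l - oneHot k i l| = 2 - 2 * x i := by
  obtain ⟨h0, h1⟩ := hx
  have hi : x i ≤ 1 := h1 ▸ Finset.single_le_sum (fun j _ => h0 j) (Finset.mem_univ i)
  have key : ∀ l, |x l - oneHot k i l| = x l + if l = i then 1 - 2 * x i else 0 := by
    intro l
    by_cases h : l = i
    · subst h
      simp only [oneHot, if_true]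
      rw [abs_of_nonpos (by linarith)]
      ring
    · simp [oneHot, h, abs_of_nonneg (h0 l)]
  simp only [key, Finset.sum_add_distrib, h1, Finset.sum_ite_eq', Finset.mem_univ, if_true]
  ring

/-- On the simplex, `gMap ψ x` maximizes `2 x i + ψ i`, ties going to the smallest index. -/
theorem gMap_spec {k : ℕ} [NeZero k] {x : Fin k → ℝ} (hx : x ∈ simplexSet k)
    (ψ : Fin k → ℝ) (j : Fin k) :
    2 * x j + ψ j ≤ 2 * x (gMap ψ x) + ψ (gMap ψ x) ∧
      (2 * x j + ψ j = 2 * x (gMap ψ x) + ψ (gMap ψ x) → gMap ψ x ≤ j) := by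
  have h1 := argminIdx_le (fun i => (∑ l, |x l - oneHot k i l|) - ψ i) j
  have h2 := argminIdx_le_of_eq (fun i => (∑ l, |x l - oneHot k i l|) - ψ i) j
  change _ → gMap ψ x ≤ j at h2
  simp only [sum_abs_sub_oneHot hx] at h1 h2
  have e : argminIdx (fun i => 2 - 2 * x i - ψ i) = gMap ψ x := by
    simp only [gMap, sum_abs_sub_oneHot hx]
  rw [e] at h1 h2
  exact ⟨by linarith, fun h => h2 (by linarith)⟩

/-- A nontrivial relation among the `k` sum-zero vectors `e_{f0 x} - e_{f1 x}`, in the dual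
form "the relation annihilates every potential `φ`". -/
theorem exists_relation {k : ℕ} [NeZero k] (C : Finset (Fin k → ℝ)) (hcard : C.card = k)
    (f0 f1 : (Fin k → ℝ) → Fin k) :
    ∃ c : (Fin k → ℝ) → ℝ, (∃ x ∈ C, c x ≠ 0) ∧
      ∀ φ : Fin k → ℝ, ∑ x ∈ C, c x * (φ (f0 x) - φ (f1 x)) = 0 := by
  let v : (Fin k → ℝ) → Fin k → ℝ := fun x => Pi.single (f0 x) 1 - Pi.single (f1 x) 1
  have hdep : ¬ LinearIndepOn ℝ v (C : Set (Fin k → ℝ)) := by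
    intro hli
    have hspan := LinearIndependent.span_eq_top_of_card_eq_finrank' hli (by simp [hcard])
    -- the coordinate sum vanishes on all `v x`, but not on `e_0`
    let s : (Fin k → ℝ) →ₗ[ℝ] ℝ := ∑ i, LinearMap.proj i
    have hs : Submodule.span ℝ (Set.range fun x : (C : Set (Fin k → ℝ)) => v x)
        ≤ LinearMap.ker s := by
      rw [Submodule.span_le]
      rintro _ ⟨x, rfl⟩
      simp [s, v]
    rw [hspan] at hs
    have := hs (Submodule.mem_top (x := Pi.single (0 : Fin k) (1 : ℝ)))
    simp [s] at this
  rw [linearIndepOn_finset_iff] at hdep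
  push Not at hdep
  obtain ⟨c, hc, hx⟩ := hdep
  refine ⟨c, hx, fun φ => ?_⟩
  have := congrArg (fun w => ∑ i, φ i * w i) hc
  simp only [Finset.sum_apply, Pi.smul_apply, smul_eq_mul, Pi.zero_apply, mul_zero,
    Finset.sum_const_zero, Finset.mul_sum] at this
  rw [Finset.sum_comm] at this
  rw [← this]
  refine Finset.sum_congr rfl fun x _ => ?_
  simp only [v, Pi.sub_apply, Pi.single_apply, mul_sub, Finset.sum_sub_distrib]
  simp [mul_comm]

/-- **Natarajan dimension upper bound** (Theorem D.6, Part 1).  No subset of the simplex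
of cardinality `k` is Natarajan-shattered by the class `𝒢_k = {g_ψ : ψ ∈ ℝ^k}`: for every
`C ⊆ Δ_k` with `|C| = k` and every pair `f₀, f₁ : C → [k]` with `f₀(x) ≠ f₁(x)` on `C`,
there is a subset `B ⊆ C` that no `g_ψ` realizes (outputting `e_{f₀(x)}` on `B` and
`e_{f₁(x)}` on `C \ B`).  Consequently the Natarajan dimension of `𝒢_k` is `< k`. -/
theorem natarajan_dim_lt (k : ℕ) (hk : 2 ≤ k) [NeZero k]
    (C : Finset (Fin k → ℝ)) (hC : ↑C ⊆ simplexSet k) (hcard : C.card = k)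
    (f0 f1 : (Fin k → ℝ) → Fin k) (hne : ∀ x ∈ C, f0 x ≠ f1 x) :
    ∃ B ⊆ C, ¬∃ ψ : Fin k → ℝ,
      (∀ x ∈ B, gMap ψ x = f0 x) ∧ (∀ x ∈ C, x ∉ B → gMap ψ x = f1 x) := by
  by_contra! hcon
  obtain ⟨c, ⟨x₀, hx₀, hcx₀⟩, hc⟩ := exists_relation C hcard f0 f1
  obtain ⟨ψ, hψ0, hψ1⟩ := hcon (C.filter fun x => 0 < c x) (Finset.filter_subset _ _)
  obtain ⟨ψ', hψ'0, hψ'1⟩ := hcon (C.filter fun x => c x < 0) (Finset.filter_subset _ _)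
  let m : (Fin k → ℝ) → (Fin k → ℝ) → ℝ := fun φ x =>
    (2 * x (f0 x) + φ (f0 x)) - (2 * x (f1 x) + φ (f1 x))
  -- equality of the two margins would be a tie for both `ψ` and `ψ'`, forcing `f0 x = f1 x`
  have hterm : ∀ x ∈ C, 0 ≤ c x * (m ψ x - m ψ' x) ∧
      (c x ≠ 0 → c x * (m ψ x - m ψ' x) ≠ 0) := by
    intro x hx
    have hfx := hne x hx
    rcases lt_trichotomy (c x) 0 with h | h | h
    · have e1 : gMap ψ x = f1 x := hψ1 x hx (by simp [hx, h.le])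
      have e2 : gMap ψ' x = f0 x := hψ'0 x (by simp [hx, h])
      have a := gMap_spec (hC hx) ψ (f0 x)
      have b := gMap_spec (hC hx) ψ' (f1 x)
      rw [e1] at a
      rw [e2] at b
      have hlt : m ψ x - m ψ' x < 0 := by
        refine lt_of_le_of_ne (by simp only [m]; linarith [a.1, b.1]) fun h0 => ?_
        simp only [m] at h0
        exact hfx (le_antisymm (b.2 (by linarith [a.1, b.1])) (a.2 (by linarith [a.1, b.1])))
      have := mul_pos_of_neg_of_neg h hlt
      exact ⟨this.le, fun _ => this.ne'⟩
    · simp [h]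
    · have e1 : gMap ψ x = f0 x := hψ0 x (by simp [hx, h])
      have e2 : gMap ψ' x = f1 x := hψ'1 x hx (by simp [hx, h.le])
      have a := gMap_spec (hC hx) ψ (f1 x)
      have b := gMap_spec (hC hx) ψ' (f0 x)
      rw [e1] at a
      rw [e2] at b
      have hlt : 0 < m ψ x - m ψ' x := by
        refine lt_of_le_of_ne (by simp only [m]; linarith [a.1, b.1]) fun h0 => ?_
        simp only [m] at h0
        exact hfx (le_antisymm (a.2 (by linarith [a.1, b.1])) (b.2 (by linarith [a.1, b.1])))
      have := mul_pos h hlt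
      exact ⟨this.le, fun _ => this.ne'⟩
  -- the `x`-parts of the margins cancel, leaving the potential `ψ - ψ'`
  have hsum : ∑ x ∈ C, c x * (m ψ x - m ψ' x) = 0 := by
    rw [← hc (fun i => ψ i - ψ' i)]
    refine Finset.sum_congr rfl fun x _ => ?_
    simp only [m]
    ring
  exact (hterm x₀ hx₀).2 hcx₀
    ((Finset.sum_eq_zero_iff_of_nonneg fun x hx => (hterm x hx).1).mp hsum x₀ hx₀)

end
end
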